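/- arXiv:2403.02109 — 3 statements merged into one kernel-verified Lean document; each statement's English description precedes it below -/
import Mathlib

section
/- For every n ≥ 1, the minimal length of a CX circuit on n wires (on the fully-connected topology) that is a solution to the WPA problem equals 2ⁿ − 2. -/
/-!
Lower bound. Besides the `n` initial signatures, a solution must produce `2 ^ n - 1 - n` further
nonzero vectors, one gate each. Moreover a wire that is ever a target must end on a basis vector,
and the gate that puts it there produces nothing new. At most one wire is never a target: if wires
`i ≠ j` were both untouched, the signature `e_i + e_j` would be the sum of two current signatures,
contradicting linear independence (`exists_inverse`). So there are at least `n - 1` wasted gates.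
The bookkeeping is `exists_budget`: new vectors and touched wires sitting on a basis vector
together cost one gate each.

Upper bound. Adding a wire `a` to a set `S` of `m ≥ 1` wires, keep the wires of `S` at their initial
signatures and drive wire `a` around the coset `e_a + span S` along a cyclic Gray code
(`exists_gray`), which takes `2 ^ m` gates and returns wire `a` to `e_a`. Summing over the wires
gives `2 + 4 + ⋯ + 2 ^ (n - 1) = 2 ^ n - 2` gates (`exists_circuit`).
-/


/-- One step of the wire-signature evolution: applying the CX gate `g = (c, t)`
updates the target wire's signature to the sum of the target's and control's
signatures; all other wires are unchanged. -/
def sigStep {n : ℕ} (f : Fin n → Fin n → ZMod 2) (g : Fin n × Fin n) :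
    Fin n → Fin n → ZMod 2 :=
  Function.update f g.2 (f g.2 + f g.1)

/-- Wire signatures after executing the whole circuit `Q`; the initial
signature of wire `k` is the standard basis vector `e_k` of `𝔽₂ⁿ`. -/
def wireSig {n : ℕ} (Q : List (Fin n × Fin n)) : Fin n → Fin n → ZMod 2 :=
  Q.foldl sigStep (fun k => Pi.single k 1)

/-- The circuit `Q` enumerates `𝔽₂ⁿ \ {0}`: every nonzero vector appears as a
wire signature at some time `0 ≤ t ≤ len Q`. -/
def Enumerates {n : ℕ} (Q : List (Fin n × Fin n)) : Prop :=
  ∀ v : Fin n → ZMod 2, v ≠ 0 →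
    ∃ k : Fin n, ∃ t ≤ Q.length, wireSig (Q.take t) k = v

/-- A solution to the SPA problem: a circuit enumerating `𝔽₂ⁿ \ {0}`. -/
def IsSPA {n : ℕ} (Q : List (Fin n × Fin n)) : Prop := Enumerates Q

/-- A solution to the WPA problem: a circuit enumerating `𝔽₂ⁿ \ {0}` whose
final wire signatures are `e_{σ(k)}` for some permutation `σ` of the wires. -/
def IsWPA {n : ℕ} (Q : List (Fin n × Fin n)) : Prop :=
  Enumerates Q ∧ ∃ σ : Equiv.Perm (Fin n), ∀ k, wireSig Q k = Pi.single (σ k) 1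

/-- A solution to the NPA problem: a circuit enumerating `𝔽₂ⁿ \ {0}` whose
final wire signatures equal the initial ones. -/
def IsNPA {n : ℕ} (Q : List (Fin n × Fin n)) : Prop :=
  Enumerates Q ∧ ∀ k, wireSig Q k = Pi.single k 1

theorem wireSig_append_singleton {n : ℕ} (Q : List (Fin n × Fin n)) (g : Fin n × Fin n) :
    wireSig (Q ++ [g]) = sigStep (wireSig Q) g := by
  simp [wireSig]

/-- Membership in the trace of a circuit, phrased with prefixes instead of times. -/
theorem exists_take_iff {n : ℕ} (Q : List (Fin n × Fin n)) (v : Fin n → ZMod 2) :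
    (∃ k : Fin n, ∃ t ≤ Q.length, wireSig (Q.take t) k = v) ↔
      ∃ P, P <+: Q ∧ ∃ k, wireSig P k = v := by
  constructor
  · rintro ⟨k, t, -, h⟩
    exact ⟨_, List.take_prefix t Q, k, h⟩
  · rintro ⟨P, hP, k, h⟩
    refine ⟨k, P.length, hP.length_le, ?_⟩
    rwa [← List.prefix_iff_eq_take.mp hP]

theorem add_self_zmod2 {n : ℕ} (v : Fin n → ZMod 2) : v + v = 0 := by
  funext i
  exact CharTwo.add_self_eq_zero (v i)

/-! ### Lower bound -/

/-- The signatures at any time are the image of the standard basis under an invertible linear map;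
only a left inverse `A` is recorded. -/
theorem exists_inverse {n : ℕ} (Q : List (Fin n × Fin n)) (hQ : ∀ g ∈ Q, g.1 ≠ g.2) :
    ∃ A : (Fin n → ZMod 2) →+ (Fin n → ZMod 2), ∀ k, A (wireSig Q k) = Pi.single k 1 := by
  induction Q using List.reverseRecOn with
  | nil => exact ⟨AddMonoidHom.id _, fun k => rfl⟩
  | append_singleton Q g ih =>
    obtain ⟨A, hA⟩ := ih fun g hg => hQ g (by simp [hg])
    have hg : g.1 ≠ g.2 := hQ g (by simp)
    -- The gate is undone by the transvection `x ↦ x + x_t e_c`.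
    let B : (Fin n → ZMod 2) →+ (Fin n → ZMod 2) :=
      { toFun := fun x => x + Pi.single g.1 (x g.2)
        map_zero' := by simp
        map_add' := fun x y => by
          rw [Pi.add_apply, Pi.single_add]
          abel }
    have hB : ∀ x, B x = x + Pi.single g.1 (x g.2) := fun _ => rfl
    refine ⟨B.comp A, fun k => ?_⟩
    rw [wireSig_append_singleton, AddMonoidHom.comp_apply, hB]
    by_cases hk : k = g.2
    · subst hk
      simp [sigStep, hA, hg.symm, add_assoc, add_self_zmod2]
    · simp [sigStep, hk, hA, Ne.symm hk]

theorem wireSig_of_untouched {n : ℕ} (Q : List (Fin n × Fin n)) (i : Fin n)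
    (hi : ∀ g ∈ Q, g.2 ≠ i) : wireSig Q i = Pi.single i 1 := by
  induction Q using List.reverseRecOn with
  | nil => rfl
  | append_singleton Q g ih =>
    have hg : g.2 ≠ i := hi g (by simp)
    rw [wireSig_append_singleton, sigStep, Function.update_of_ne hg.symm]
    exact ih fun g hg => hi g (by simp [hg])

theorem untouched_unique {n : ℕ} (Q : List (Fin n × Fin n)) (hQ : ∀ g ∈ Q, g.1 ≠ g.2)
    (hE : Enumerates Q) (i j : Fin n) (hi : ∀ g ∈ Q, g.2 ≠ i) (hj : ∀ g ∈ Q, g.2 ≠ j) :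
    i = j := by
  by_contra hij
  have hv : (Pi.single i 1 + Pi.single j 1 : Fin n → ZMod 2) ≠ 0 := fun h => by
    simpa [hij] using congrFun h i
  obtain ⟨P, hP, k, hk⟩ := (exists_take_iff Q _).mp (hE _ hv)
  obtain ⟨A, hA⟩ := exists_inverse P fun g hg => hQ g (hP.subset hg)
  rw [← wireSig_of_untouched P i fun g hg => hi g (hP.subset hg),
    ← wireSig_of_untouched P j fun g hg => hj g (hP.subset hg)] at hk
  have h := congrArg A hk
  rw [map_add, hA, hA, hA] at h
  by_cases hki : k = i
  · subst hki
    simpa [hij, Ne.symm hij] using congrFun h j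
  · simpa [hij, Ne.symm hki, Ne.symm hij, hki] using congrFun h i

/-- A gate either creates a non-basis vector, which can only enlarge the set `V` of visited vectors,
or puts its target on a basis vector, which can only enlarge the set `D` of touched wires carrying a basis vector;
it never does both. -/
theorem exists_budget {n : ℕ} (Q : List (Fin n × Fin n)) :
    ∃ (V : Finset (Fin n → ZMod 2)) (D : Finset (Fin n)),
      (∀ P, P <+: Q → ∀ k, wireSig P k ∈ V) ∧
      (∀ g ∈ Q, ∀ i, wireSig Q g.2 = Pi.single i 1 → g.2 ∈ D) ∧
      V.card + D.card ≤ n + Q.length := by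
  classical
  induction Q using List.reverseRecOn with
  | nil =>
    refine ⟨Finset.univ.image fun k => Pi.single k 1, ∅, ?_, by simp, ?_⟩
    · intro P hP k
      rw [List.prefix_nil.mp hP]
      exact Finset.mem_image_of_mem _ (Finset.mem_univ k)
    · simpa using Finset.card_image_le (s := (Finset.univ : Finset (Fin n)))
        (f := fun k => (Pi.single k 1 : Fin n → ZMod 2))
  | append_singleton Q g ih =>
    obtain ⟨V, D, hV, hD, hc⟩ := ih
    have hne : ∀ k, k ≠ g.2 → wireSig (Q ++ [g]) k = wireSig Q k := fun k hk => by
      rw [wireSig_append_singleton, sigStep, Function.update_of_ne hk]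
    have hD' : ∀ h ∈ Q ++ [g], h.2 ≠ g.2 → ∀ i,
        wireSig (Q ++ [g]) h.2 = Pi.single i 1 → h.2 ∈ D := fun h hh hhg i hi => by
      have hhQ : h ∈ Q := by
        rcases List.mem_append.mp hh with h1 | h1
        · exact h1
        · exact absurd (congrArg Prod.snd (List.mem_singleton.mp h1)) hhg
      exact hD h hhQ i ((hne _ hhg).symm.trans hi)
    by_cases hb : ∃ i, wireSig (Q ++ [g]) g.2 = Pi.single i 1
    · refine ⟨V, insert g.2 D, ?_, ?_, ?_⟩
      · intro P hP k
        rcases List.prefix_concat_iff.mp hP with rfl | hP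
        · by_cases hk : k = g.2
          · obtain ⟨i, hi⟩ := hb
            rw [hk, hi]
            exact hV [] (List.nil_prefix) i
          · rw [hne k hk]
            exact hV Q (List.prefix_refl Q) k
        · exact hV P hP k
      · intro h hh i hi
        by_cases hhg : h.2 = g.2
        · simp [hhg]
        · exact Finset.mem_insert_of_mem (hD' h hh hhg i hi)
      · have := Finset.card_insert_le g.2 D
        simp only [List.length_append, List.length_singleton]
        omega
    · refine ⟨insert (wireSig (Q ++ [g]) g.2) V, D, ?_, ?_, ?_⟩
      · intro P hP k
        rcases List.prefix_concat_iff.mp hP with rfl | hP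
        · by_cases hk : k = g.2
          · simp [hk]
          · rw [hne k hk]
            exact Finset.mem_insert_of_mem (hV Q (List.prefix_refl Q) k)
        · exact Finset.mem_insert_of_mem (hV P hP k)
      · intro h hh i hi
        by_cases hhg : h.2 = g.2
        · exact absurd ⟨i, hhg ▸ hi⟩ hb
        · exact hD' h hh hhg i hi
      · have := Finset.card_insert_le (wireSig (Q ++ [g]) g.2) V
        simp only [List.length_append, List.length_singleton]
        omega

theorem lower_bound {n : ℕ} (Q : List (Fin n × Fin n)) (hQ : ∀ g ∈ Q, g.1 ≠ g.2)
    (hW : IsWPA Q) : 2 ^ n - 2 ≤ Q.length := by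
  classical
  obtain ⟨hE, σ, hσ⟩ := hW
  obtain ⟨V, D, hV, hD, hc⟩ := exists_budget Q
  have hV' : (Finset.univ.erase (0 : Fin n → ZMod 2)) ⊆ V := fun v hv => by
    obtain ⟨P, hP, k, rfl⟩ := (exists_take_iff Q v).mp (hE v (Finset.ne_of_mem_erase hv))
    exact hV P hP k
  have hVc := Finset.card_le_card hV'
  rw [Finset.card_erase_of_mem (Finset.mem_univ _), Finset.card_univ] at hVc
  simp only [Fintype.card_fun, ZMod.card, Fintype.card_fin] at hVc
  have hDc : Dᶜ.card ≤ 1 := by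
    rw [Finset.card_le_one]
    have key : ∀ i ∈ Dᶜ, ∀ g ∈ Q, g.2 ≠ i := by
      rintro i hi g hg rfl
      exact Finset.mem_compl.mp hi (hD g hg _ (hσ _))
    exact fun i hi j hj => untouched_unique Q hQ hE i j (key i hi) (key j hj)
  rw [Finset.card_compl, Fintype.card_fin] at hDc
  omega

/-! ### Upper bound -/

/-- The sum of the basis vectors indexed by a list, with multiplicity. -/
def basisSum {n : ℕ} (P : List (Fin n)) : Fin n → ZMod 2 :=
  (P.map fun c => Pi.single c 1).sum

theorem basisSum_append {n : ℕ} (P R : List (Fin n)) :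
    basisSum (P ++ R) = basisSum P + basisSum R := by
  simp [basisSum]

theorem basisSum_cons {n : ℕ} (a : Fin n) (P : List (Fin n)) :
    basisSum (a :: P) = Pi.single a 1 + basisSum P := by
  simp [basisSum]

theorem basisSum_apply_eq_zero {n : ℕ} (P : List (Fin n)) (i : Fin n) (hi : i ∉ P) :
    basisSum P i = 0 := by
  induction P with
  | nil => rfl
  | cons a P ih =>
    rw [List.mem_cons, not_or] at hi
    rw [basisSum_cons, Pi.add_apply, ih hi.2, Pi.single_eq_of_ne hi.1, add_zero]

/-- The binary reflected Gray code on the coordinates in `S`, given by the list of coordinates to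
flip: it traverses all vectors supported on `S`, and ends one flip away from `0`. -/
theorem exists_gray {n : ℕ} (S : Finset (Fin n)) :
    ∃ P : List (Fin n), (∀ c ∈ P, c ∈ S) ∧ P.length + 1 = 2 ^ S.card ∧
      (∀ v : Fin n → ZMod 2, (∀ i ∉ S, v i = 0) → ∃ R, R <+: P ∧ basisSum R = v) ∧
      (S.Nonempty → ∃ c ∈ S, basisSum P = Pi.single c 1) := by
  classical
  induction S using Finset.induction_on with
  | empty =>
    refine ⟨[], by simp, by simp, fun v hv => ⟨[], List.prefix_refl _, ?_⟩, by simp⟩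
    funext i
    exact (hv i (by simp)).symm
  | insert a S ha ih =>
    obtain ⟨P, hPS, hlen, hcov, -⟩ := ih
    refine ⟨P ++ a :: P, ?_, ?_, ?_, ?_⟩
    · intro c hc
      simp only [List.mem_append, List.mem_cons] at hc
      rcases hc with h | h | h
      · exact Finset.mem_insert_of_mem (hPS c h)
      · simp [h]
      · exact Finset.mem_insert_of_mem (hPS c h)
    · rw [Finset.card_insert_of_notMem ha, pow_succ, ← hlen]
      simp only [List.length_append, List.length_cons]
      ring
    · intro v hv
      by_cases hva : v a = 0
      · obtain ⟨R, hR, hRv⟩ := hcov v fun i hi => by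
          by_cases hia : i = a
          · rw [hia, hva]
          · exact hv i (by simp [hia, hi])
        exact ⟨R, hR.trans (List.prefix_append _ _), hRv⟩
      · have hva1 : v a = 1 := by
          generalize v a = x at hva
          revert x
          decide
        -- The second copy of `P` starts at `basisSum P + e_a`, so it has to stop at
        -- `v + basisSum P + e_a` to reach `v`.
        obtain ⟨R, hR, hRv⟩ := hcov (v + basisSum P + Pi.single a 1) fun i hi => by
          have hPi : basisSum P i = 0 := basisSum_apply_eq_zero P i fun h => hi (hPS i h)
          by_cases hia : i = a
          · subst hia
            simpa [hva1, hPi] using CharTwo.add_self_eq_zero (1 : ZMod 2)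
          · simp [hia, hPi, hv i (by simp [hia, hi])]
        refine ⟨P ++ a :: R, ?_, ?_⟩
        · exact (List.prefix_append_right_inj P).mpr (List.cons_prefix_cons.mpr ⟨rfl, hR⟩)
        · rw [basisSum_append, basisSum_cons, hRv]
          calc basisSum P + (Pi.single a 1 + (v + basisSum P + Pi.single a 1))
              = v + (basisSum P + basisSum P)
                + ((Pi.single a 1 : Fin n → ZMod 2) + Pi.single a 1) := by abel
            _ = v := by rw [add_self_zmod2, add_self_zmod2, add_zero, add_zero]
    · intro _
      refine ⟨a, by simp, ?_⟩
      rw [basisSum_append, basisSum_cons, add_left_comm, add_self_zmod2, add_zero]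

/-- From the initial state, gates with controls `P` and a common target `a ∉ P` only change
wire `a`. -/
theorem wireSig_append_map {n : ℕ} (Q : List (Fin n × Fin n)) (a : Fin n) (P : List (Fin n))
    (hQ : ∀ k, wireSig Q k = Pi.single k 1) (ha : a ∉ P) :
    wireSig (Q ++ P.map fun c => (c, a)) =
      Function.update (fun k => Pi.single k 1) a (Pi.single a 1 + basisSum P) := by
  induction P using List.reverseRecOn with
  | nil =>
    have h : wireSig Q = fun k => Pi.single k 1 := funext hQ
    simp [h, basisSum]
  | append_singleton P c ih =>
    simp only [List.mem_append, List.mem_singleton, not_or] at ha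
    rw [List.map_append, ← List.append_assoc, List.map_singleton, wireSig_append_singleton,
      ih ha.1, sigStep]
    simp [basisSum_append, basisSum_cons, Function.update_of_ne (Ne.symm ha.2), add_assoc,
      show basisSum ([] : List (Fin n)) = 0 from rfl]

/-- A circuit that enumerates the nonzero vectors supported on `S` and restores the initial state,
built by adding one wire and one Gray cycle at a time. -/
theorem exists_circuit {n : ℕ} (S : Finset (Fin n)) (hS : S.Nonempty) :
    ∃ Q : List (Fin n × Fin n), (∀ g ∈ Q, g.1 ≠ g.2) ∧ Q.length + 2 = 2 ^ S.card ∧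
      (∀ k, wireSig Q k = Pi.single k 1) ∧
      ∀ v : Fin n → ZMod 2, v ≠ 0 → (∀ i ∉ S, v i = 0) →
        ∃ P, P <+: Q ∧ ∃ k, wireSig P k = v := by
  classical
  have eq_one : ∀ x : ZMod 2, x ≠ 0 → x = 1 := by decide
  induction hS using Finset.Nonempty.cons_induction with
  | singleton a =>
    refine ⟨[], by simp, by simp, fun k => rfl, fun v hv hs =>
      ⟨[], List.prefix_refl _, a, ?_⟩⟩
    have hoff : ∀ i, i ≠ a → v i = 0 := fun i hi => hs i (by simpa using hi)
    have hva : v a = 1 := eq_one _ fun h => hv <| funext fun i => by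
      by_cases hia : i = a
      · rw [hia, h, Pi.zero_apply]
      · exact hoff i hia
    funext i
    change (Pi.single a 1 : Fin n → ZMod 2) i = v i
    by_cases hia : i = a
    · simp [hia, hva]
    · simp [hia, hoff i hia]
  | cons a S ha hS ih =>
    obtain ⟨Q, hQ, hlen, hid, hcov⟩ := ih
    obtain ⟨P, hPS, hPlen, hPcov, hPend⟩ := exists_gray S
    obtain ⟨c, hcS, hc⟩ := hPend hS
    -- The Gray code, closed up to a cycle by one more flip.
    have haP : a ∉ P ++ [c] := by
      simp only [List.mem_append, List.mem_singleton, not_or]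
      exact ⟨fun h => ha (hPS a h), fun h => ha (h ▸ hcS)⟩
    refine ⟨Q ++ (P ++ [c]).map fun c => (c, a), ?_, ?_, ?_, ?_⟩
    · intro g hg
      rcases List.mem_append.mp hg with h | h
      · exact hQ g h
      · obtain ⟨d, hd, rfl⟩ := List.mem_map.mp h
        intro hda
        exact haP ((show d = a from hda) ▸ hd)
    · rw [Finset.card_cons, pow_succ]
      simp only [List.length_append, List.length_map, List.length_singleton]
      omega
    · intro k
      rw [wireSig_append_map Q a _ hid haP, basisSum_append, hc, basisSum_cons,
        show basisSum ([] : List (Fin n)) = 0 from rfl, add_zero, add_self_zmod2, add_zero]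
      exact congrFun (Function.update_eq_self a _) k
    · intro v hv hs
      by_cases hva : v a = 0
      · obtain ⟨R, hR, h⟩ := hcov v hv fun i hi => by
          by_cases hia : i = a
          · rw [hia, hva]
          · exact hs i (by simp [hia, hi])
        exact ⟨R, hR.trans (List.prefix_append _ _), h⟩
      · obtain ⟨R, hR, hRv⟩ := hPcov (Pi.single a 1 + v) fun i hi => by
          by_cases hia : i = a
          · subst hia
            simpa [eq_one _ hva] using CharTwo.add_self_eq_zero (1 : ZMod 2)
          · simp [hia, hs i (by simp [hia, hi])]
        have haR : a ∉ R := fun h => haP (List.mem_append_left _ (hR.subset h))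
        refine ⟨Q ++ R.map fun c => (c, a), ?_, a, ?_⟩
        · exact (List.prefix_append_right_inj Q).mpr
            ((hR.trans (List.prefix_append _ _)).map _)
        · rw [wireSig_append_map Q a R hid haR, Function.update_self, hRv, ← add_assoc,
            add_self_zmod2, zero_add]

/-- For every `n ≥ 1`, the minimal length of a CX circuit on `n`
wires (fully-connected topology) solving the WPA problem equals `2 ^ n - 2`. -/
theorem stmt_6 (n : ℕ) (hn : 1 ≤ n) :
    IsLeast {L : ℕ | ∃ Q : List (Fin n × Fin n),
        (∀ g ∈ Q, g.1 ≠ g.2) ∧ IsWPA Q ∧ Q.length = L}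
      (2 ^ n - 2) := by
  constructor
  · have : Nonempty (Fin n) := ⟨⟨0, hn⟩⟩
    obtain ⟨Q, hQ, hlen, hid, hcov⟩ := exists_circuit (Finset.univ : Finset (Fin n))
      Finset.univ_nonempty
    rw [Finset.card_univ, Fintype.card_fin] at hlen
    refine ⟨Q, hQ, ⟨fun v hv => ?_, Equiv.refl _, hid⟩, by omega⟩
    exact (exists_take_iff Q v).mpr (hcov v hv fun i hi => absurd (Finset.mem_univ i) hi)
  · rintro L ⟨Q, hQ, hW, rfl⟩
    exact lower_bound Q hQ hW
end

section
/- For every n ≥ 1, the circuit GRAY_n consists of exactly (5·2ⁿ + (−1)ⁿ − 6n − 3)/6 gates, i.e. len(GRAY_n) = 5·2ⁿ/6 − n + (−1)ⁿ/6 − 1/2. -/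
/-! Write `g n` for the number of gates of `GRAY n`. Relabelling wires does not change the number of
gates, and `V(i, j)` has `2 * |i - j| - 1` gates (`length_Vcirc`), so unfolding `GRAY (n + 2)` once
gives `g (n + 2) = 2 * g (n + 1) + (n + 1)` for even `n` and `g (n + 2) = 2 * g (n + 1) + n` for
odd `n`. The closed form satisfies the same recurrence and vanishes at `n = 1`. -/

/-- Evolution of wire data under a CX circuit whose wires are indexed by `ℕ`:
each gate `g = (c, t)` replaces the data on its target wire `t` with the sum
of the data on wires `t` and `c`; all other wires are unchanged. -/
def runN {α : Type} [Add α] (w : ℕ → α) (Q : List (ℕ × ℕ)) : ℕ → α :=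
  Q.foldl (fun f g => Function.update f g.2 (f g.2 + f g.1)) w

/-- Wire signatures of a circuit: the initial signature of wire `k` is the
standard basis vector `e_k`. -/
def wireSigN (Q : List (ℕ × ℕ)) : ℕ → ℕ → ZMod 2 :=
  runN (fun k => Pi.single k 1) Q

/-- The circuit `V(i, j)`: a single gate `(i, j)` if `|i - j| = 1`, and
otherwise the gate `(i, i + d)` followed by `V(i + d, j)` followed by the gate
`(i, i + d)`, where `d = sgn (j - i)`. -/
def Vcirc (i j : ℕ) : List (ℕ × ℕ) :=
  if _h : i = j then []
  else if _h2 : i + 1 = j ∨ j + 1 = i then [(i, j)]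
  else if _h3 : i < j then (i, i + 1) :: (Vcirc (i + 1) j ++ [(i, i + 1)])
  else (i, i - 1) :: (Vcirc (i - 1) j ++ [(i, i - 1)])
termination_by (i - j) + (j - i)
decreasing_by all_goals omega

/-- The circuit `GRAY n` on wires `{0, …, n-1}`: `GRAY 1` is empty; for even
`n = 2m` it is `GRAY (n-1)` shifted to wires `{1, …, n-1}`, then `V(0, m)`,
then `GRAY (n-1)` shifted again; for odd `n = 2m + 1 ≥ 3` it is `GRAY (n-1)`
on wires `{0, …, n-2}`, then `V(n-1, m)`, then `GRAY (n-1)` again. -/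
def GRAY : ℕ → List (ℕ × ℕ)
  | 0 => []
  | 1 => []
  | n + 2 =>
    if (n + 2) % 2 = 0 then
      (GRAY (n + 1)).map (fun g => (g.1 + 1, g.2 + 1)) ++ Vcirc 0 ((n + 2) / 2)
        ++ (GRAY (n + 1)).map (fun g => (g.1 + 1, g.2 + 1))
    else
      GRAY (n + 1) ++ Vcirc (n + 1) ((n + 2) / 2) ++ GRAY (n + 1)

/-- The three CX gates implementing `SWAP(i, i+1)`. -/
def SWAPg (i : ℕ) : List (ℕ × ℕ) := [(i, i + 1), (i + 1, i), (i, i + 1)]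

/-- The circuit `SPA n` on wires `{0, …, n-1}`: `SPA 1` is empty; for `n ≥ 2`
with `m = ⌊n/2⌋` it is `GRAY n`, then `SWAP(m, m+1), …, SWAP(n-2, n-1)`, then
`SPA (n-1)` on the first `n - 1` wires. -/
def SPAc : ℕ → List (ℕ × ℕ)
  | 0 => []
  | 1 => []
  | n + 2 =>
    GRAY (n + 2)
      ++ (List.range (n + 1 - (n + 2) / 2)).flatMap (fun s => SWAPg ((n + 2) / 2 + s))
      ++ SPAc (n + 1)

/-- The number of gates of `V(i, j)`, stated additively with `|i - j|` written as
`(i - j) + (j - i)` (one of the two truncated differences is `0`). -/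
theorem length_Vcirc (i j : ℕ) (hij : i ≠ j) :
    (Vcirc i j).length + 1 = 2 * ((i - j) + (j - i)) := by
  induction i using Vcirc.induct (j := j) with
  | case1 => exact absurd rfl hij
  | case2 i h h2 =>
    rw [Vcirc, dif_neg h, dif_pos h2]
    simp only [List.length_singleton]
    omega
  | case3 i h h2 h3 ih =>
    rw [Vcirc, dif_neg h, dif_neg h2, dif_pos h3]
    have := ih (by omega)
    simp only [List.length_cons, List.length_append, List.length_nil]
    omega
  | case4 i h h2 h3 ih =>
    rw [Vcirc, dif_neg h, dif_neg h2, dif_neg h3]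
    have := ih (by omega)
    simp only [List.length_cons, List.length_append, List.length_nil]
    omega

theorem length_GRAY_of_even (n : ℕ) (h : n % 2 = 0) :
    (GRAY (n + 2)).length = 2 * (GRAY (n + 1)).length + (n + 1) := by
  have hV := length_Vcirc 0 ((n + 2) / 2) (by omega)
  rw [GRAY, if_pos (by omega)]
  simp only [List.length_append, List.length_map]
  omega

theorem length_GRAY_of_odd (n : ℕ) (h : n % 2 = 1) :
    (GRAY (n + 2)).length = 2 * (GRAY (n + 1)).length + n := by
  have hV := length_Vcirc (n + 1) ((n + 2) / 2) (by omega)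
  rw [GRAY, if_neg (by omega)]
  simp only [List.length_append]
  omega

/-- For every `n ≥ 1`, the circuit `GRAY n` consists of exactly
`(5·2ⁿ + (-1)ⁿ - 6n - 3) / 6` gates, i.e.
`len (GRAY n) = 5·2ⁿ/6 - n + (-1)ⁿ/6 - 1/2`. -/
theorem stmt_10 (n : ℕ) (hn : 1 ≤ n) :
    (6 * (GRAY n).length : ℤ) = 5 * 2 ^ n + (-1) ^ n - 6 * n - 3 := by
  obtain ⟨k, rfl⟩ : ∃ k, n = k + 1 := ⟨n - 1, by omega⟩
  clear hn
  induction k with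
  | zero => simp [GRAY]
  | succ k ih =>
    rcases Nat.even_or_odd k with hk | hk
    · rw [length_GRAY_of_even k (Nat.even_iff.mp hk)]
      push_cast [pow_succ, hk.neg_one_pow] at ih ⊢
      linarith
    · rw [length_GRAY_of_odd k (Nat.odd_iff.mp hk)]
      push_cast [pow_succ, hk.neg_one_pow] at ih ⊢
      linarith
end

section
/- Let n ≥ 2, let 1 ≤ k < n with gcd(k, n) = 1, and let 1 ≤ l < n satisfy k·l ≡ −1 (mod n). Assume the polynomial f(X) = Xⁿ + Xˡ + 1 over 𝔽₂ is primitive, i.e. f is irreducible and its roots have multiplicative order 2ⁿ − 1 in 𝔽_{2ⁿ}×. Then the CX circuit on n wires consisting of the gates (k·j mod n, (k·j + 1) mod n) for j = 0, 1, …, 2ⁿ − n − 2 (in increasing order of j) respects the circular topology and enumerates 𝔽₂ⁿ∖{0}, i.e. it is a solution to the SPA problem of the optimal length 2ⁿ − n − 1. -/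
/-- The circuit consisting of the gates
`(k·j mod n, (k·j + 1) mod n)` for `j = 0, 1, …, len - 1`. -/
def circCircuit (n k len : ℕ) (hn : 0 < n) : List (Fin n × Fin n) :=
  (List.range len).map fun j =>
    (⟨k * j % n, Nat.mod_lt _ hn⟩, ⟨(k * j + 1) % n, Nat.mod_lt _ hn⟩)

/-- A circuit of length `m` shows at most `n + m` different signatures. -/
theorem signatures_bound {n : ℕ} (Q : List (Fin n × Fin n)) :
    ∃ S : Finset (Fin n → ZMod 2), S.card ≤ n + Q.length ∧
      ∀ t ≤ Q.length, ∀ k, wireSig (Q.take t) k ∈ S := by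
  classical
  induction Q using List.reverseRecOn with
  | nil =>
    refine ⟨Finset.univ.image (wireSig []), ?_, ?_⟩
    · simpa using (Finset.card_image_le (s := Finset.univ) (f := wireSig (n := n) []))
    · intro t _ k
      simp
  | append_singleton Q g ih =>
    obtain ⟨S, hS, hmem⟩ := ih
    refine ⟨insert (wireSig (Q ++ [g]) g.2) S, ?_, ?_⟩
    · have := Finset.card_insert_le (wireSig (Q ++ [g]) g.2) S
      simp only [List.length_append, List.length_singleton]
      omega
    · intro t ht k
      rw [List.length_append, List.length_singleton] at ht
      rcases Nat.lt_or_ge Q.length t with h | h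
      · have htake : (Q ++ [g]).take t = Q ++ [g] :=
          List.take_of_length_le (by simp; omega)
        rw [htake]
        by_cases hk : k = g.2
        · subst hk
          exact Finset.mem_insert_self _ _
        · have h1 : wireSig (Q ++ [g]) k = wireSig Q k := by
            simp [wireSig, List.foldl_append, sigStep, Function.update_of_ne hk]
          rw [h1]
          refine Finset.mem_insert_of_mem ?_
          simpa using hmem Q.length le_rfl k
      · rw [List.take_append_of_le_length h]
        exact Finset.mem_insert_of_mem (hmem t h k)

theorem card_nonzero (n : ℕ) :
    (Finset.univ.filter fun v : Fin n → ZMod 2 => v ≠ 0).card = 2 ^ n - 1 := by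
  rw [Finset.filter_ne', Finset.card_erase_of_mem (Finset.mem_univ _)]
  simp

theorem circCircuit_succ (n k j : ℕ) (hn : 0 < n) :
    circCircuit n k (j + 1) hn = circCircuit n k j hn ++
      [(⟨k * j % n, Nat.mod_lt _ hn⟩, ⟨(k * j + 1) % n, Nat.mod_lt _ hn⟩)] := by
  simp [circCircuit, List.range_succ]

theorem circCircuit_length (n k m : ℕ) (hn : 0 < n) :
    (circCircuit n k m hn).length = m := by
  simp [circCircuit]

theorem circCircuit_take (n k j m : ℕ) (hn : 0 < n) (h : j ≤ m) :
    (circCircuit n k m hn).take j = circCircuit n k j hn := by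
  simp [circCircuit, ← List.map_take, List.take_range, Nat.min_eq_left h]

/-- The wire `k * m + 1 (mod n)`, whose label is `m`. -/
def wire (n k : ℕ) (hn : 0 < n) (m : ℕ) : Fin n := ⟨(k * m + 1) % n, Nat.mod_lt _ hn⟩

theorem wire_eq_iff {n k : ℕ} (hn : 0 < n) (hcop : Nat.Coprime k n) (a b : ℕ) :
    wire n k hn a = wire n k hn b ↔ a ≡ b [MOD n] := by
  simp only [wire, Fin.mk.injEq]
  constructor
  · intro h
    exact Nat.ModEq.cancel_left_of_coprime hcop.symm
      (Nat.ModEq.add_right_cancel' 1 (show k * a + 1 ≡ k * b + 1 [MOD n] from h))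
  · intro h
    exact (h.mul_left k).add_right 1

/-- The linear map `φ` identifying the basis vector of the wire with label `i < n` with `α ^ i`. -/
theorem exists_phi {F : Type*} [Field F] [Algebra (ZMod 2) F] (α : F) {n k : ℕ} (hn : 0 < n)
    (hcop : Nat.Coprime k n) :
    ∃ φ : (Fin n → ZMod 2) →ₗ[ZMod 2] F,
      ∀ i < n, φ (Pi.single (wire n k hn i) 1) = α ^ i := by
  have hinj : Function.Injective (fun i : Fin n => wire n k hn i) := by
    intro a b h
    have h1 := (wire_eq_iff hn hcop a b).1 h
    exact Fin.ext (Nat.ModEq.eq_of_lt_of_lt h1 a.2 b.2)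
  let σ : Fin n ≃ Fin n := Equiv.ofBijective _ (Finite.injective_iff_bijective.1 hinj)
  refine ⟨(Pi.basisFun (ZMod 2) (Fin n)).constr (ZMod 2) (fun w => α ^ (σ.symm w : ℕ)), ?_⟩
  intro i hi
  have h := (Pi.basisFun (ZMod 2) (Fin n)).constr_basis (ZMod 2)
    (fun w => α ^ (σ.symm w : ℕ)) (wire n k hn i)
  rw [Pi.basisFun_apply] at h
  rw [h]
  have : σ.symm (wire n k hn i) = ⟨i, hi⟩ := by
    rw [Equiv.symm_apply_eq]
    rfl
  rw [this]

/-- After `j` gates the wire with label `j + i` (`i < n`) holds a vector which `φ` sends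
to `α ^ (j + i)`. -/
theorem circ_state {F : Type*} [Field F] [Algebra (ZMod 2) F] {α : F} {n k l : ℕ} (hn : 0 < n)
    (hcop : Nat.Coprime k n) (hln : l < n) (hkl : (k * l + 1) % n = 0)
    (hα : α ^ n = α ^ l + 1) (φ : (Fin n → ZMod 2) →ₗ[ZMod 2] F)
    (hφ : ∀ i < n, φ (Pi.single (wire n k hn i) 1) = α ^ i) (j : ℕ) :
    ∀ i < n, φ (wireSig (circCircuit n k j hn) (wire n k hn (j + i))) = α ^ (j + i) := by
  induction j with
  | zero =>
    intro i hi
    simpa [circCircuit, wireSig] using hφ i hi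
  | succ j ih =>
    intro i hi
    have hctrl : (⟨k * j % n, Nat.mod_lt _ hn⟩ : Fin n) = wire n k hn (j + l) := by
      apply Fin.ext
      have h0 : k * l + 1 ≡ 0 [MOD n] := hkl
      have h1 := (h0.add_left (k * j)).symm
      have h2 : k * (j + l) + 1 = k * j + (k * l + 1) := by ring
      simp only [wire, h2]
      exact h1
    have hstep : wireSig (circCircuit n k (j + 1) hn) =
        sigStep (wireSig (circCircuit n k j hn)) (wire n k hn (j + l), wire n k hn j) := by
      rw [circCircuit_succ, hctrl]
      simp [wireSig, wire]
    rw [hstep]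
    rcases Nat.lt_or_ge (i + 1) n with h | h
    · have hne : wire n k hn (j + 1 + i) ≠ wire n k hn j := by
        rw [Ne, wire_eq_iff hn hcop]
        intro hc
        have hc' : j + (i + 1) ≡ j + 0 [MOD n] := by
          rw [add_zero]
          convert hc using 1
          ring
        have h0 := Nat.ModEq.add_left_cancel' j hc'
        have := Nat.ModEq.eq_of_lt_of_lt h0 h hn
        omega
      have h3 := ih (i + 1) h
      rw [show j + (i + 1) = j + 1 + i by ring] at h3
      simpa [sigStep, Function.update_of_ne hne] using h3
    · have hi' : j + 1 + i = j + n := by omega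
      have heq : wire n k hn (j + n) = wire n k hn j := by
        rw [wire_eq_iff hn hcop]
        simp [Nat.ModEq]
      have h0 := ih 0 hn
      rw [add_zero] at h0
      rw [hi', heq]
      simp only [sigStep, Function.update_self, map_add, h0, ih l hln]
      rw [pow_add, pow_add, hα]
      ring


/-- Let `n ≥ 2`, `1 ≤ k < n` with `gcd(k, n) = 1`, and
`1 ≤ l < n` with `k·l ≡ -1 (mod n)`. If `f = Xⁿ + Xˡ + 1` over `𝔽₂` is
primitive (irreducible with roots of multiplicative order `2ⁿ - 1`), then the
CX circuit consisting of the gates `(k·j mod n, (k·j + 1) mod n)` for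
`j = 0, …, 2ⁿ - n - 2` respects the circular topology and enumerates
`𝔽₂ⁿ \ {0}`, i.e. it is a solution to the SPA problem, of the optimal length
`2ⁿ - n - 1` (no circuit enumerating `𝔽₂ⁿ \ {0}` is shorter). -/
theorem stmt_17 (n k l : ℕ) (hn : 2 ≤ n) (hk1 : 1 ≤ k) (hkn : k < n)
    (hcop : Nat.Coprime k n) (hl1 : 1 ≤ l) (hln : l < n)
    (hkl : (k * l + 1) % n = 0)
    (hirr : Irreducible (Polynomial.X ^ n + Polynomial.X ^ l + 1 :
      Polynomial (ZMod 2)))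
    (hord : orderOf (AdjoinRoot.root
        (Polynomial.X ^ n + Polynomial.X ^ l + 1 : Polynomial (ZMod 2)))
      = 2 ^ n - 1) :
    (∀ g ∈ circCircuit n k (2 ^ n - n - 1) (by omega),
      g.1 ≠ g.2 ∧
        (((g.1 : ℕ) + 1) % n = (g.2 : ℕ) ∨ ((g.2 : ℕ) + 1) % n = (g.1 : ℕ))) ∧
    IsSPA (circCircuit n k (2 ^ n - n - 1) (by omega)) ∧
    (circCircuit n k (2 ^ n - n - 1) (by omega)).length = 2 ^ n - n - 1 ∧
    (∀ Q' : List (Fin n × Fin n), (∀ g ∈ Q', g.1 ≠ g.2) → IsSPA Q' →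
      2 ^ n - n - 1 ≤ Q'.length) := by
  have hn0 : 0 < n := by omega
  have hpow : n + 1 ≤ 2 ^ n := Nat.lt_two_pow_self
  refine ⟨?_, ?_, circCircuit_length _ _ _ _, ?_⟩
  · intro g hg
    simp only [circCircuit, List.mem_map, List.mem_range] at hg
    obtain ⟨j, -, rfl⟩ := hg
    refine ⟨?_, Or.inl ?_⟩
    · intro h
      have h1 : k * j + 0 ≡ k * j + 1 [MOD n] := congrArg Fin.val h
      have h2 := Nat.ModEq.eq_of_lt_of_lt (Nat.ModEq.add_left_cancel' _ h1) hn0 (by omega)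
      omega
    · exact Nat.mod_add_mod _ _ _
  · have := Fact.mk hirr
    set f : Polynomial (ZMod 2) := Polynomial.X ^ n + Polynomial.X ^ l + 1 with hf
    set α := AdjoinRoot.root f with hαdef
    have hα : α ^ n = α ^ l + 1 := by
      have h1 : α ^ n + α ^ l + 1 = 0 := by
        have h := AdjoinRoot.mk_self (f := f)
        conv at h => lhs; arg 2; rw [hf]
        simpa only [map_add, map_pow, AdjoinRoot.mk_X, map_one] using h
      have : CharP (AdjoinRoot f) 2 := charP_of_injective_algebraMap
        (algebraMap (ZMod 2) (AdjoinRoot f)).injective 2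
      rw [← sub_eq_zero, CharTwo.sub_eq_add, ← add_assoc]
      exact h1
    have hα0 : α ≠ 0 := by
      intro h
      rw [h, orderOf_zero] at hord
      omega
    obtain ⟨φ, hφ⟩ := exists_phi α hn0 hcop
    have hst := circ_state hn0 hcop hln hkl hα φ hφ
    -- The term `s m` is read off after `min m (2 ^ n - n - 1)` gates.
    let u : ℕ → Fin n → ZMod 2 := fun m =>
      wireSig (circCircuit n k (min m (2 ^ n - n - 1)) hn0) (wire n k hn0 m)
    have hu : ∀ m < 2 ^ n - 1, φ (u m) = α ^ m := by
      intro m hm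
      have h := hst (min m (2 ^ n - n - 1)) (m - min m (2 ^ n - n - 1)) (by omega)
      rwa [show min m (2 ^ n - n - 1) + (m - min m (2 ^ n - n - 1)) = m by omega] at h
    have himg : (Finset.range (2 ^ n - 1)).image u =
        Finset.univ.filter fun v : Fin n → ZMod 2 => v ≠ 0 := by
      apply Finset.eq_of_subset_of_card_le
      · intro v hv
        obtain ⟨m, hm, rfl⟩ := Finset.mem_image.1 hv
        refine Finset.mem_filter.2 ⟨Finset.mem_univ _, fun h0 => ?_⟩
        have h := hu m (Finset.mem_range.1 hm)
        rw [h0, map_zero] at h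
        exact pow_ne_zero m hα0 h.symm
      · rw [card_nonzero, Finset.card_image_of_injOn, Finset.card_range]
        intro a ha b hb hab
        have ha' := Finset.mem_range.1 (Finset.mem_coe.1 ha)
        have hb' := Finset.mem_range.1 (Finset.mem_coe.1 hb)
        have h : α ^ a = α ^ b := by rw [← hu a ha', ← hu b hb', hab]
        exact pow_injOn_Iio_orderOf (by simpa [hord] using ha') (by simpa [hord] using hb') h
    intro v hv
    have hv' : v ∈ (Finset.range (2 ^ n - 1)).image u := by
      rw [himg]
      simpa using hv
    obtain ⟨m, -, rfl⟩ := Finset.mem_image.1 hv'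
    refine ⟨wire n k hn0 m, min m (2 ^ n - n - 1), ?_, ?_⟩
    · rw [circCircuit_length]
      exact min_le_right _ _
    · rw [circCircuit_take _ _ _ _ _ (min_le_right _ _)]
  · intro Q' _ hQ
    obtain ⟨S, hS, hmem⟩ := signatures_bound Q'
    have hsub : (Finset.univ.filter fun v : Fin n → ZMod 2 => v ≠ 0) ⊆ S := by
      intro v hv
      obtain ⟨w, t, ht, rfl⟩ := hQ v (Finset.mem_filter.1 hv).2
      exact hmem t ht w
    have h := Finset.card_le_card hsub
    rw [card_nonzero] at h
    omega
end
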